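/- The mixed extension of the two-player Moroccan procurement game has value 1/2: sup_{μ ∈ Δ[A,B]} inf_{ν ∈ Δ[A,B]} G(μ,ν) = 1/2 = inf_{ν ∈ Δ[A,B]} sup_{μ ∈ Δ[A,B]} G(μ,ν), and the pair (μ*, ν*) with μ* = ν* equal to the measure with Lebesgue density h(t) = 3/(4(E−A)) on [A, A₁), h(t) = 9/(4(E−A)) on [A₁, A₂), and 0 otherwise, is a mixed-strategy Nash equilibrium with G(μ*, ν*) = 1/2. -/

import Mathlib

/-!
The payoff satisfies `g(x,y) + g(y,x) = 1`, so the game is symmetric and constant-sum. By Fubini,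
`G(μ,ν) = 1 - G(ν,μ)` (`Gmix_swap`), and everything reduces to one estimate: against the measure
`ν*` with the given density, every pure bid `x ≥ A` earns at most `1/2`, with equality when
`A ≤ x < A₂`.

For `x < E`, the bid `x` wins against `y` exactly when `y ∈ [3x - 2E, x)` or `y > (x + 2E)/3`;
for `x ≥ E` it wins exactly when `y > x`, which has `ν*`-probability `0`. As `ν*` has no atoms and
is carried by `[A, A₂)`, the expected payoff of `x < E` is
`ν*[3x - 2E, x) + ν*[(x + 2E)/3, A₂)` (`payoff_eq`). The map `x ↦ (x + 2E)/3` contracts distances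
to `E` by `3` and carries `[A, A₁)` to `[A₁, A₂)`, each of mass `1/2` with constant density, so
this sum is `1/2` for `x` in `[A, A₂)` and at most `1/2` beyond.

The `sup inf` and `inf sup` identities follow, with `G` taking values in `[0,1]`.
-/

open MeasureTheory

/-- Reference price in the two-player Moroccan procurement game. -/
noncomputable def P2 (E x y : ℝ) : ℝ := (x + y + 2 * E) / 4

/-- Player 1's payoff in the two-player Moroccan procurement game. -/
noncomputable def g2 (E x y : ℝ) : ℝ :=
  if (y < x ∧ x ≤ P2 E x y) ∨ (P2 E x y ≤ x ∧ x < y) ∨ (x ≤ P2 E x y ∧ P2 E x y < y) then 1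
  else if x = y then 1 / 2
  else 0

/-- Density of the uniform-based equilibrium strategy:
`3/(4(E-A))` on `[a₁, a₂)`, `9/(4(E-A))` on `[a₂, a₃)` (here `a₁ = A`,
`a₂ = A₁ = (A+2E)/3`, `a₃ = A₂ = (A+8E)/9`), and `0` elsewhere. -/
noncomputable def unifDens (A E a₁ a₂ : ℝ) (t : ℝ) : ℝ :=
  if t ∈ Set.Ico A a₁ then 3 / (4 * (E - A))
  else if t ∈ Set.Ico a₁ a₂ then 9 / (4 * (E - A))
  else 0

/-- The measure on `ℝ` with Lebesgue density `unifDens`. -/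
noncomputable def unifMeas (A E a₁ a₂ : ℝ) : Measure ℝ :=
  volume.withDensity (fun t => ENNReal.ofReal (unifDens A E a₁ a₂ t))

/-- `Δ[A,B]`: Borel probability measures on `ℝ` carried by `[A,B]`. -/
def Delta (A B : ℝ) : Type :=
  {μ : Measure ℝ // IsProbabilityMeasure μ ∧ μ (Set.Icc A B)ᶜ = 0}

/-- Expected payoff of player 1 in the mixed extension. -/
noncomputable def Gmix (E : ℝ) (μ ν : Measure ℝ) : ℝ := ∫ x, ∫ y, g2 E x y ∂ν ∂μ

lemma g2_nonneg (E x y : ℝ) : 0 ≤ g2 E x y := by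
  unfold g2; split_ifs <;> norm_num

lemma g2_le_one (E x y : ℝ) : g2 E x y ≤ 1 := by
  unfold g2; split_ifs <;> norm_num

lemma norm_g2_le (E x y : ℝ) : ‖g2 E x y‖ ≤ 1 := by
  rw [Real.norm_of_nonneg (g2_nonneg E x y)]; exact g2_le_one E x y

lemma g2_add_swap (E x y : ℝ) : g2 E x y = 1 - g2 E y x := by
  unfold g2 P2
  split_ifs <;> grind

lemma measurable_g2 (E : ℝ) : Measurable (fun p : ℝ × ℝ => g2 E p.1 p.2) := by
  have hP : Measurable (fun p : ℝ × ℝ => P2 E p.1 p.2) := by unfold P2; fun_prop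
  unfold g2
  refine Measurable.ite ?_ measurable_const
    (Measurable.ite (measurableSet_eq_fun measurable_fst measurable_snd)
      measurable_const measurable_const)
  exact ((measurableSet_lt measurable_snd measurable_fst).inter
      (measurableSet_le measurable_fst hP)).union
    (((measurableSet_le hP measurable_fst).inter
      (measurableSet_lt measurable_fst measurable_snd)).union
    ((measurableSet_le measurable_fst hP).inter (measurableSet_lt hP measurable_snd)))

lemma integrable_g2 (E : ℝ) (μ ν : Measure ℝ) [IsProbabilityMeasure μ] [IsProbabilityMeasure ν] :
    Integrable (fun p : ℝ × ℝ => g2 E p.1 p.2) (μ.prod ν) :=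
  Integrable.of_bound (measurable_g2 E).aestronglyMeasurable 1
    (Filter.Eventually.of_forall fun p => norm_g2_le E p.1 p.2)

lemma integral_g2_nonneg (E x : ℝ) (ν : Measure ℝ) : 0 ≤ ∫ y, g2 E x y ∂ν :=
  integral_nonneg fun y => g2_nonneg E x y

lemma Gmix_nonneg (E : ℝ) (μ ν : Measure ℝ) : 0 ≤ Gmix E μ ν :=
  integral_nonneg fun x => integral_g2_nonneg E x ν

/-- A bound on the pure payoffs against `ν`, valid `μ`-almost surely, bounds `G(μ,ν)`. -/
lemma Gmix_le_of_ae (E C : ℝ) (μ ν : Measure ℝ) [IsProbabilityMeasure μ]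
    (h : ∀ᵐ x ∂μ, ∫ y, g2 E x y ∂ν ≤ C) : Gmix E μ ν ≤ C := by
  have := norm_integral_le_of_norm_le_const (μ := μ) (f := fun x => ∫ y, g2 E x y ∂ν) (C := C)
    (h.mono fun x hx => by rwa [Real.norm_of_nonneg (integral_g2_nonneg E x ν)])
  simp only [probReal_univ, mul_one] at this
  exact (le_abs_self _).trans this

lemma Gmix_le_one (E : ℝ) (μ ν : Measure ℝ) [IsProbabilityMeasure μ] [IsProbabilityMeasure ν] :
    Gmix E μ ν ≤ 1 := by
  refine Gmix_le_of_ae E 1 μ ν (Filter.Eventually.of_forall fun x => ?_)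
  have := norm_integral_le_of_norm_le_const (μ := ν) (f := fun y => g2 E x y) (C := 1)
    (Filter.Eventually.of_forall fun y => norm_g2_le E x y)
  simp only [probReal_univ, mul_one] at this
  exact (le_abs_self _).trans this

/-- The mixed extension is constant-sum: exchanging the two strategies exchanges the payoffs. -/
lemma Gmix_swap (E : ℝ) (μ ν : Measure ℝ) [IsProbabilityMeasure μ] [IsProbabilityMeasure ν] :
    Gmix E μ ν = 1 - Gmix E ν μ := by
  have h1 : Gmix E μ ν = ∫ y, ∫ x, g2 E x y ∂μ ∂ν := integral_integral_swap (integrable_g2 E μ ν)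
  have hint := integrable_g2 E ν μ
  have h2 : ∀ y, ∫ x, g2 E x y ∂μ = 1 - ∫ x, g2 E y x ∂μ := by
    intro y
    have hy : Integrable (fun x => g2 E y x) μ :=
      Integrable.of_bound ((measurable_g2 E).comp measurable_prodMk_left).aestronglyMeasurable 1
        (Filter.Eventually.of_forall fun x => norm_g2_le E y x)
    simp_rw [fun x => g2_add_swap E x y]
    rw [integral_sub (integrable_const _) hy]
    simp
  rw [h1]
  simp_rw [h2]
  rw [integral_sub (integrable_const _) hint.integral_prod_left]
  simp [Gmix]

lemma unifMeas_eq (A E a₁ a₂ : ℝ) :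
    unifMeas A E a₁ a₂ =
      ENNReal.ofReal (3 / (4 * (E - A))) • volume.restrict (Set.Ico A a₁) +
      ENNReal.ofReal (9 / (4 * (E - A))) • volume.restrict (Set.Ico a₁ a₂) := by
  have hf : (fun t => ENNReal.ofReal (unifDens A E a₁ a₂ t)) =
      (Set.Ico A a₁).indicator (fun _ => ENNReal.ofReal (3 / (4 * (E - A)))) +
      (Set.Ico a₁ a₂).indicator (fun _ => ENNReal.ofReal (9 / (4 * (E - A)))) := by
    funext t
    by_cases h1 : t ∈ Set.Ico A a₁
    · have h2 : t ∉ Set.Ico a₁ a₂ := fun h => absurd h1.2 (not_lt.2 h.1)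
      simp only [unifDens, Pi.add_apply, Set.indicator_of_mem h1, Set.indicator_of_notMem h2,
        if_pos h1, add_zero]
    · by_cases h2 : t ∈ Set.Ico a₁ a₂
      · simp only [unifDens, Pi.add_apply, Set.indicator_of_mem h2, Set.indicator_of_notMem h1,
          if_pos h2, if_neg h1, zero_add]
      · simp only [unifDens, Pi.add_apply, Set.indicator_of_notMem h2,
          Set.indicator_of_notMem h1, if_neg h2, if_neg h1, zero_add, ENNReal.ofReal_zero]
  rw [unifMeas, hf, withDensity_add_left (measurable_const.indicator measurableSet_Ico),
    withDensity_indicator measurableSet_Ico, withDensity_indicator measurableSet_Ico,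
    withDensity_const, withDensity_const]

instance unifMeas_finite (A E a₁ a₂ : ℝ) : IsFiniteMeasure (unifMeas A E a₁ a₂) := by
  refine ⟨?_⟩
  rw [unifMeas_eq]
  simp [ENNReal.mul_lt_top]

lemma unifMeas_real_Ico (A E a₁ a₂ a b : ℝ) (hAE : A < E) :
    (unifMeas A E a₁ a₂).real (Set.Ico a b) =
      (3 * max (min b a₁ - max a A) 0 + 9 * max (min b a₂ - max a a₁) 0) / (4 * (E - A)) := by
  have hd : 0 < E - A := sub_pos.2 hAE
  rw [measureReal_def, unifMeas_eq]
  simp only [Measure.add_apply, Measure.smul_apply, smul_eq_mul,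
    Measure.restrict_apply measurableSet_Ico, Set.Ico_inter_Ico, Real.volume_Ico]
  rw [ENNReal.toReal_add (ENNReal.mul_ne_top ENNReal.ofReal_ne_top ENNReal.ofReal_ne_top)
    (ENNReal.mul_ne_top ENNReal.ofReal_ne_top ENNReal.ofReal_ne_top), ENNReal.toReal_mul,
    ENNReal.toReal_mul,
    ENNReal.toReal_ofReal (r := 3 / (4 * (E - A))) (by positivity),
    ENNReal.toReal_ofReal (r := 9 / (4 * (E - A))) (by positivity),
    ENNReal.toReal_ofReal', ENNReal.toReal_ofReal']
  ring

lemma unifMeas_ac (A E a₁ a₂ : ℝ) : unifMeas A E a₁ a₂ ≪ volume :=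
  withDensity_absolutelyContinuous _ _

lemma unifMeas_ae_ne (A E a₁ a₂ x : ℝ) : ∀ᵐ y ∂(unifMeas A E a₁ a₂), y ≠ x :=
  (unifMeas_ac A E a₁ a₂).ae_le (Measure.ae_ne volume x)

lemma unifMeas_ae_mem (A E a₁ a₂ : ℝ) (h1 : A ≤ a₁) (h2 : a₁ ≤ a₂) :
    ∀ᵐ y ∂(unifMeas A E a₁ a₂), y ∈ Set.Ico A a₂ := by
  rw [unifMeas_eq, ae_add_measure_iff]
  constructor
  · refine Measure.ae_smul_measure ?_ _
    filter_upwards [ae_restrict_mem measurableSet_Ico] with y hy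
    exact ⟨hy.1, hy.2.trans_le h2⟩
  · refine Measure.ae_smul_measure ?_ _
    filter_upwards [ae_restrict_mem measurableSet_Ico] with y hy
    exact ⟨h1.trans hy.1, hy.2⟩

/-- Expected payoff of a pure bid below `E`: the two intervals are those of the opposing bids
that lose to `x`, up to null sets. -/
lemma payoff_eq (A E a₁ a₂ x : ℝ) (h1 : A ≤ a₁) (h2 : a₁ ≤ a₂) (hx : x < E) :
    ∫ y, g2 E x y ∂(unifMeas A E a₁ a₂) =
      (unifMeas A E a₁ a₂).real (Set.Ico (3 * x - 2 * E) x) +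
      (unifMeas A E a₁ a₂).real (Set.Ico ((x + 2 * E) / 3) a₂) := by
  have hae : (fun y => g2 E x y) =ᵐ[unifMeas A E a₁ a₂]
      fun y => (Set.Ico (3 * x - 2 * E) x).indicator (fun _ => (1 : ℝ)) y +
        (Set.Ico ((x + 2 * E) / 3) a₂).indicator (fun _ => (1 : ℝ)) y := by
    filter_upwards [unifMeas_ae_ne A E a₁ a₂ x, unifMeas_ae_ne A E a₁ a₂ ((x + 2 * E) / 3),
      unifMeas_ae_mem A E a₁ a₂ h1 h2] with y hy1 hy2 hy3
    simp only [Set.indicator_apply, Set.mem_Ico] at *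
    unfold g2 P2
    split_ifs <;> grind
  rw [integral_congr_ae hae, integral_add
    ((integrable_const _).indicator measurableSet_Ico)
    ((integrable_const _).indicator measurableSet_Ico),
    integral_indicator_const _ measurableSet_Ico, integral_indicator_const _ measurableSet_Ico]
  simp

lemma payoff_le (A E x : ℝ) (hAE : A < E) (hx : A ≤ x) :
    ∫ y, g2 E x y ∂(unifMeas A E ((A + 2 * E) / 3) ((A + 8 * E) / 9)) ≤ 1 / 2 := by
  have hd : 0 < E - A := sub_pos.2 hAE
  rcases lt_or_ge x E with h | h
  · rw [payoff_eq _ _ _ _ _ (by linarith) (by linarith) h, unifMeas_real_Ico _ _ _ _ _ _ hAE,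
      unifMeas_real_Ico _ _ _ _ _ _ hAE, ← add_div, div_le_div_iff₀ (by positivity) (by norm_num)]
    grind
  · have hae : (fun y => g2 E x y) =ᵐ[unifMeas A E ((A + 2 * E) / 3) ((A + 8 * E) / 9)]
        fun _ => (0 : ℝ) := by
      filter_upwards [unifMeas_ae_mem A E ((A + 2 * E) / 3) ((A + 8 * E) / 9) (by linarith)
        (by linarith)] with y hy
      obtain ⟨hy1, hy2⟩ := hy
      unfold g2 P2
      split_ifs <;> grind
    rw [integral_congr_ae hae]
    norm_num

lemma payoff_eq_half (A E x : ℝ) (hAE : A < E) (hx : A ≤ x) (hx2 : x < (A + 8 * E) / 9) :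
    ∫ y, g2 E x y ∂(unifMeas A E ((A + 2 * E) / 3) ((A + 8 * E) / 9)) = 1 / 2 := by
  have hd : 0 < E - A := sub_pos.2 hAE
  rw [payoff_eq _ _ _ _ _ (by linarith) (by linarith) (by linarith),
    unifMeas_real_Ico _ _ _ _ _ _ hAE, unifMeas_real_Ico _ _ _ _ _ _ hAE, ← add_div,
    div_eq_div_iff (by positivity) (by norm_num)]
  grind

lemma unifMeas_prob (A E : ℝ) (hAE : A < E) :
    IsProbabilityMeasure (unifMeas A E ((A + 2 * E) / 3) ((A + 8 * E) / 9)) := by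
  have hd : 0 < E - A := sub_pos.2 hAE
  set ν := unifMeas A E ((A + 2 * E) / 3) ((A + 8 * E) / 9) with hν
  have hu : ν Set.univ = ν (Set.Ico A ((A + 8 * E) / 9)) := by
    refine (measure_eq_measure_of_null_sdiff (Set.subset_univ _) ?_).symm
    rw [← Set.compl_eq_univ_sdiff]
    exact unifMeas_ae_mem A E ((A + 2 * E) / 3) ((A + 8 * E) / 9) (by linarith) (by linarith)
  have hr : ν.real (Set.Ico A ((A + 8 * E) / 9)) = 1 := by
    rw [hν, unifMeas_real_Ico _ _ _ _ _ _ hAE, div_eq_one_iff_eq (by positivity)]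
    grind
  refine ⟨?_⟩
  rw [hu, ← ENNReal.toReal_eq_one_iff]
  exact hr

/-- The mixed extension of the two-player Moroccan procurement game has value `1/2`,
and `μ* = ν*` with density `3/(4(E-A))` on `[A,A₁)`, `9/(4(E-A))` on `[A₁,A₂)` is a
mixed-strategy Nash equilibrium with equilibrium payoff `1/2` (player 2 minimizes `G`). -/
theorem mixed_value_and_equilibrium (A E B : ℝ) (hAE : A < E) (hEB : E < B)
    (A₁ A₂ : ℝ) (hA₁ : A₁ = (A + 2 * E) / 3) (hA₂ : A₂ = (A + 8 * E) / 9) :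
    (⨆ μ : Delta A B, ⨅ ν : Delta A B, Gmix E μ.1 ν.1) = 1 / 2 ∧
    (⨅ ν : Delta A B, ⨆ μ : Delta A B, Gmix E μ.1 ν.1) = 1 / 2 ∧
    IsProbabilityMeasure (unifMeas A E A₁ A₂) ∧
    (unifMeas A E A₁ A₂) (Set.Icc A B)ᶜ = 0 ∧
    (∀ μ : Measure ℝ, IsProbabilityMeasure μ → μ (Set.Icc A B)ᶜ = 0 →
      Gmix E μ (unifMeas A E A₁ A₂) ≤ Gmix E (unifMeas A E A₁ A₂) (unifMeas A E A₁ A₂)) ∧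
    (∀ ν : Measure ℝ, IsProbabilityMeasure ν → ν (Set.Icc A B)ᶜ = 0 →
      Gmix E (unifMeas A E A₁ A₂) ν ≥ Gmix E (unifMeas A E A₁ A₂) (unifMeas A E A₁ A₂)) ∧
    Gmix E (unifMeas A E A₁ A₂) (unifMeas A E A₁ A₂) = 1 / 2 := by
  subst hA₁ hA₂
  have hprob := unifMeas_prob A E hAE
  have hmem := unifMeas_ae_mem A E ((A + 2 * E) / 3) ((A + 8 * E) / 9) (by linarith) (by linarith)
  have hle : ∀ μ : Measure ℝ, IsProbabilityMeasure μ → μ (Set.Icc A B)ᶜ = 0 →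
      Gmix E μ (unifMeas A E ((A + 2 * E) / 3) ((A + 8 * E) / 9)) ≤ 1 / 2 := by
    intro μ _ hμ0
    have hμ : ∀ᵐ x ∂μ, x ∈ Set.Icc A B := hμ0
    exact Gmix_le_of_ae E _ μ _ (hμ.mono fun x hx => payoff_le A E x hAE hx.1)
  have heq : Gmix E (unifMeas A E ((A + 2 * E) / 3) ((A + 8 * E) / 9))
      (unifMeas A E ((A + 2 * E) / 3) ((A + 8 * E) / 9)) = 1 / 2 := by
    unfold Gmix
    rw [integral_congr_ae (hmem.mono fun x hx => payoff_eq_half A E x hAE hx.1 hx.2)]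
    simp
  have hsupp : (unifMeas A E ((A + 2 * E) / 3) ((A + 8 * E) / 9)) (Set.Icc A B)ᶜ = 0 := by
    have : ∀ᵐ y ∂(unifMeas A E ((A + 2 * E) / 3) ((A + 8 * E) / 9)), y ∈ Set.Icc A B :=
      hmem.mono fun y hy => ⟨hy.1, by linarith [hy.2]⟩
    exact this
  generalize unifMeas A E ((A + 2 * E) / 3) ((A + 8 * E) / 9) = σ at *
  have hge : ∀ ν : Measure ℝ, IsProbabilityMeasure ν → ν (Set.Icc A B)ᶜ = 0 →
      1 / 2 ≤ Gmix E σ ν := by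
    intro ν hν hν0
    rw [Gmix_swap]
    linarith [hle ν hν hν0]
  let s : Delta A B := ⟨σ, hprob, hsupp⟩
  have : Nonempty (Delta A B) := ⟨s⟩
  have hbelow : ∀ μ : Delta A B, BddBelow (Set.range fun ν : Delta A B => Gmix E μ.1 ν.1) :=
    fun μ => ⟨0, by rintro _ ⟨ν, rfl⟩; exact Gmix_nonneg _ _ _⟩
  have habove : ∀ ν : Delta A B, BddAbove (Set.range fun μ : Delta A B => Gmix E μ.1 ν.1) :=
    fun ν => ⟨1, by
      rintro _ ⟨μ, rfl⟩
      have := μ.2.1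
      have := ν.2.1
      exact Gmix_le_one _ _ _⟩
  have hinf : ∀ μ : Delta A B, (⨅ ν : Delta A B, Gmix E μ.1 ν.1) ≤ 1 / 2 :=
    fun μ => (ciInf_le (hbelow μ) s).trans (hle μ.1 μ.2.1 μ.2.2)
  have hsup : ∀ ν : Delta A B, 1 / 2 ≤ ⨆ μ : Delta A B, Gmix E μ.1 ν.1 :=
    fun ν => (hge ν.1 ν.2.1 ν.2.2).trans (le_ciSup (habove ν) s)
  refine ⟨le_antisymm (ciSup_le hinf) ?_, le_antisymm ?_ (le_ciInf hsup), hprob, hsupp,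
    fun μ h h0 => (hle μ h h0).trans_eq heq.symm, fun ν h h0 => heq.trans_le (hge ν h h0), heq⟩
  · exact (le_ciInf fun ν : Delta A B => hge ν.1 ν.2.1 ν.2.2).trans
      (le_ciSup (f := fun μ : Delta A B => ⨅ ν : Delta A B, Gmix E μ.1 ν.1)
        ⟨1 / 2, by rintro _ ⟨μ, rfl⟩; exact hinf μ⟩ s)
  · exact (ciInf_le (f := fun ν : Delta A B => ⨆ μ : Delta A B, Gmix E μ.1 ν.1)
        ⟨1 / 2, by rintro _ ⟨ν, rfl⟩; exact hsup ν⟩ s).trans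
      (ciSup_le fun μ : Delta A B => hle μ.1 μ.2.1 μ.2.2)
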